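/- arXiv:1903.06826 — 2 statements merged into one kernel-verified Lean document; each statement's English description precedes it below -/
import Mathlib

section
/- Let a, b ∈ ℝ and define Φ : ℝ² → ℝ by Φ(u,v) = sgn(cos(2πu)·cos(2πv)). Then there exists a real number L such that (1/T)·∫₀ᵀ Φ(t, a·t + b) dt → L as T → ∞; moreover, if a is irrational then L = 0. -/
open Filter Real MeasureTheory

noncomputable def sgn (t : ℝ) : ℝ := if 0 < t then 1 else if t < 0 then -1 else 0

noncomputable def Φ (u v : ℝ) : ℝ := sgn (Real.cos (2 * π * u) * Real.cos (2 * π * v))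

lemma sgn_mul (x y : ℝ) : sgn (x * y) = sgn x * sgn y := by
  rcases lt_trichotomy x 0 with hx | rfl | hx <;> rcases lt_trichotomy y 0 with hy | rfl | hy <;>
    simp [sgn, *, mul_pos_of_neg_of_neg, mul_neg_of_neg_of_pos, mul_neg_of_pos_of_neg,
      not_lt_of_gt]

lemma sgn_neg (x : ℝ) : sgn (-x) = -sgn x := by
  rcases lt_trichotomy x 0 with hx | rfl | hx <;> simp [sgn, *, not_lt_of_gt]

lemma abs_sgn_le_one (x : ℝ) : |sgn x| ≤ 1 := by
  unfold sgn; split_ifs <;> simp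

lemma measurable_sgn : Measurable sgn :=
  Measurable.ite measurableSet_Ioi measurable_const
    (Measurable.ite measurableSet_Iio measurable_const measurable_const)

/-- The square wave of period `1`. -/
noncomputable def squareWave (t : ℝ) : ℝ := sgn (Real.cos (2 * π * t))

lemma Φ_eq_mul (u v : ℝ) : Φ u v = squareWave u * squareWave v := sgn_mul _ _

lemma measurable_squareWave : Measurable squareWave :=
  measurable_sgn.comp (by fun_prop)

lemma abs_squareWave_le_one (t : ℝ) : |squareWave t| ≤ 1 := abs_sgn_le_one _

lemma cos_two_pi_mul_add_int (t : ℝ) (n : ℤ) :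
    Real.cos (2 * π * (t + n)) = Real.cos (2 * π * t) := by
  rw [← Real.cos_add_int_mul_two_pi (2 * π * t) n]; congr 1; ring

lemma squareWave_add_int (t : ℝ) (n : ℤ) : squareWave (t + n) = squareWave t := by
  simp only [squareWave, cos_two_pi_mul_add_int]

lemma squareWave_add_half (t : ℝ) : squareWave (t + 1 / 2) = -squareWave t := by
  rw [squareWave, squareWave, ← sgn_neg, ← Real.cos_add_pi]; congr 2; ring

lemma Measurable.intervalIntegrable_of_norm_le {E : Type*} [NormedAddCommGroup E]
    [MeasurableSpace E] [BorelSpace E] [SecondCountableTopology E] {f : ℝ → E}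
    (hf : Measurable f) {C : ℝ} (hC : ∀ t, ‖f t‖ ≤ C) (x y : ℝ) :
    IntervalIntegrable f volume x y :=
  (intervalIntegrable_const (c := C)).mono_fun hf.aestronglyMeasurable
    (Eventually.of_forall fun t => (hC t).trans (le_abs_self C))

lemma tendsto_inv_mul_of_abs_sub_le {F : ℝ → ℝ} {c B : ℝ} (h : ∀ T, |F T - T * c| ≤ B) :
    Tendsto (fun T : ℝ => T⁻¹ * F T) atTop (nhds c) := by
  have h0 : Tendsto (fun T : ℝ => T⁻¹ * (F T - T * c)) atTop (nhds 0) := by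
    refine tendsto_inv_atTop_zero.zero_mul_isBoundedUnder_le ?_
    exact isBoundedUnder_of ⟨B, fun T => h T⟩
  have h1 := h0.add_const c
  rw [zero_add] at h1
  refine h1.congr' ?_
  filter_upwards [eventually_gt_atTop 0] with T hT
  field_simp
  ring

/-- The time average of a bounded measurable periodic function is its mean over a period. -/
lemma Function.Periodic.tendsto_average {f : ℝ → ℝ} {P C : ℝ} (hP : 0 < P)
    (hper : Function.Periodic f P) (hf : Measurable f) (hC : ∀ t, |f t| ≤ C) :
    Tendsto (fun T : ℝ => T⁻¹ * ∫ t in (0:ℝ)..T, f t) atTop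
      (nhds (P⁻¹ * ∫ t in (0:ℝ)..P, f t)) := by
  have hint := fun x y => hf.intervalIntegrable_of_norm_le hC x y
  set c := P⁻¹ * ∫ t in (0:ℝ)..P, f t with hc
  have hJ : Function.Periodic (fun T : ℝ => (∫ t in (0:ℝ)..T, f t) - T * c) P := by
    intro T
    have h1 := intervalIntegral.integral_add_adjacent_intervals (hint 0 T) (hint T (T + P))
    rw [hper.intervalIntegral_add_eq T 0, zero_add] at h1
    have h2 : P * c = ∫ t in (0:ℝ)..P, f t := by rw [hc]; field_simp
    simp only [← h1, ← h2]
    ring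
  have hcont : Continuous (fun T : ℝ => (∫ t in (0:ℝ)..T, f t) - T * c) :=
    (intervalIntegral.continuous_primitive hint 0).sub (by fun_prop)
  obtain ⟨B, hB⟩ := (isCompact_Icc (a := (0:ℝ)) (b := P)).exists_bound_of_continuousOn
    hcont.continuousOn
  refine tendsto_inv_mul_of_abs_sub_le (B := B) fun T => ?_
  obtain ⟨y, hy, hTy⟩ := hJ.exists_mem_Ico₀ hP T
  have := hB y ⟨hy.1, hy.2.le⟩
  rwa [← hTy] at this

/-- Oscillatory integrals of an antiperiodic function against a non-resonant
quasiperiodic factor stay bounded. -/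
lemma exists_norm_integral_mul_le {h e : ℝ → ℂ} {Q : ℝ} {w : ℂ} (hw : 1 + w ≠ 0)
    (hh : Measurable h) (he : Measurable e) (hh1 : ∀ t, ‖h t‖ ≤ 1) (he1 : ∀ t, ‖e t‖ ≤ 1)
    (hQ : ∀ t, h (t + Q) = -h t) (heQ : ∀ t, e (t + Q) = w * e t) :
    ∃ B, ∀ T, ‖∫ t in (0:ℝ)..T, e t * h t‖ ≤ B := by
  have hb : ∀ t, ‖e t * h t‖ ≤ 1 := fun t => by
    rw [norm_mul]; exact mul_le_one₀ (he1 t) (norm_nonneg _) (hh1 t)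
  have hint : ∀ x y, IntervalIntegrable (fun t => e t * h t) volume x y :=
    (he.mul hh).intervalIntegrable_of_norm_le hb
  refine ⟨2 * |Q| / ‖1 + w‖, fun T => ?_⟩
  rw [le_div_iff₀ (norm_pos_iff.2 hw), ← norm_mul]
  have hshift : ∫ t in Q..(T + Q), e t * h t = -w * ∫ t in (0:ℝ)..T, e t * h t := by
    rw [← intervalIntegral.integral_const_mul, ← zero_add Q, ← add_assoc, add_zero,
      ← intervalIntegral.integral_comp_add_right (fun t => e t * h t) Q]
    refine intervalIntegral.integral_congr fun t _ => ?_
    simp only [hQ, heQ]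
    ring
  have h1 := intervalIntegral.integral_add_adjacent_intervals (hint 0 Q) (hint Q (T + Q))
  have h2 := intervalIntegral.integral_add_adjacent_intervals (hint 0 T) (hint T (T + Q))
  have key : (∫ t in (0:ℝ)..T, e t * h t) * (1 + w)
      = (∫ t in (0:ℝ)..Q, e t * h t) - ∫ t in T..(T + Q), e t * h t := by
    rw [hshift] at h1
    linear_combination h2 - h1
  rw [key]
  have b1 := intervalIntegral.norm_integral_le_of_norm_le_const (a := 0) (b := Q)
    fun t _ => hb t
  have b2 := intervalIntegral.norm_integral_le_of_norm_le_const (a := T) (b := T + Q)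
    fun t _ => hb t
  simp only [sub_zero, one_mul, add_sub_cancel_left] at b1 b2
  linarith [norm_sub_le (∫ t in (0:ℝ)..Q, e t * h t) (∫ t in T..(T + Q), e t * h t)]

lemma norm_exp_two_pi_mul (m : ℤ) (t : ℝ) : ‖Complex.exp (2 * π * m * t * Complex.I)‖ = 1 := by
  have := Complex.norm_exp_ofReal_mul_I (2 * π * m * t)
  push_cast at this
  exact this

lemma one_add_exp_ne_zero {a : ℝ} (ha : Irrational a) (m : ℤ) :
    1 + Complex.exp (2 * π * m * (1 / (2 * a) : ℝ) * Complex.I) ≠ 0 := by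
  intro h
  have ha0 : (a : ℂ) ≠ 0 := by exact_mod_cast ha.ne_zero
  have h1 : Complex.exp (2 * π * m * (1 / (2 * a) : ℝ) * Complex.I)
      = Complex.exp (π * Complex.I) := by
    rw [Complex.exp_pi_mul_I]; linear_combination h
  obtain ⟨n, hn⟩ := Complex.exp_eq_exp_iff_exists_int.1 h1
  have hpi : (π : ℂ) ≠ 0 := by exact_mod_cast Real.pi_ne_zero
  have h2 : (m : ℂ) = a * (2 * n + 1) := by
    push_cast at hn
    field_simp at hn
    linear_combination hn
  have h3 : (m : ℝ) = a * ((2 * n + 1 : ℤ) : ℝ) := by exact_mod_cast h2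
  have hk : (2 * n + 1 : ℤ) ≠ 0 := by omega
  exact (ha.mul_intCast hk).ne_int m h3.symm

lemma exists_norm_integral_cos_pow_mul_exp_le {a : ℝ} (ha : Irrational a) (b : ℝ) (j : ℕ) (m : ℤ) :
    ∃ B, ∀ T, ‖∫ t in (0:ℝ)..T, (Real.cos (2 * π * t) : ℂ) ^ j *
      Complex.exp (2 * π * m * t * Complex.I) * squareWave (a * t + b)‖ ≤ B := by
  have hs : Measurable fun t : ℝ => (squareWave (a * t + b) : ℂ) :=
    Complex.measurable_ofReal.comp (measurable_squareWave.comp (by fun_prop))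
  have hs1 : ∀ t : ℝ, ‖(squareWave (a * t + b) : ℂ)‖ ≤ 1 := fun t => by
    rw [Complex.norm_real]; exact abs_squareWave_le_one _
  induction j generalizing m with
  | zero =>
    simp only [pow_zero, one_mul]
    refine exists_norm_integral_mul_le (Q := 1 / (2 * a)) (one_add_exp_ne_zero ha m) hs
      (by fun_prop) hs1 (fun t => (norm_exp_two_pi_mul m t).le) (fun t => ?_) (fun t => ?_)
    · have ha0 := ha.ne_zero
      have : a * (t + 1 / (2 * a)) + b = (a * t + b) + 1 / 2 := by field_simp; ring
      rw [this, squareWave_add_half]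
      push_cast; rfl
    · rw [← Complex.exp_add]; congr 1; push_cast; ring
  | succ j ih =>
    obtain ⟨B₁, h₁⟩ := ih (m + 1)
    obtain ⟨B₂, h₂⟩ := ih (m - 1)
    have hint : ∀ (n : ℤ) (T : ℝ), IntervalIntegrable (fun t : ℝ => (Real.cos (2 * π * t) : ℂ) ^ j *
        Complex.exp (2 * π * n * t * Complex.I) * squareWave (a * t + b)) volume 0 T := by
      intro n T
      refine Measurable.intervalIntegrable_of_norm_le (C := 1) (Measurable.mul ?_ hs) ?_ _ _
      · fun_prop
      · intro t
        rw [Pi.mul_apply, norm_mul, norm_mul, norm_exp_two_pi_mul, norm_pow, Complex.norm_real, mul_one]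
        exact mul_le_one₀ (pow_le_one₀ (norm_nonneg _) (Real.abs_cos_le_one _)) (norm_nonneg _)
          (hs1 t)
    refine ⟨(B₁ + B₂) / 2, fun T => ?_⟩
    have heq : (∫ t in (0:ℝ)..T, (Real.cos (2 * π * t) : ℂ) ^ (j + 1) *
        Complex.exp (2 * π * m * t * Complex.I) * squareWave (a * t + b)) =
        (1 / 2 : ℂ) * ((∫ t in (0:ℝ)..T, (Real.cos (2 * π * t) : ℂ) ^ j *
          Complex.exp (2 * π * (m + 1 : ℤ) * t * Complex.I) * squareWave (a * t + b)) +
        ∫ t in (0:ℝ)..T, (Real.cos (2 * π * t) : ℂ) ^ j *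
          Complex.exp (2 * π * (m - 1 : ℤ) * t * Complex.I) * squareWave (a * t + b)) := by
      rw [← intervalIntegral.integral_add (hint _ T) (hint _ T),
        ← intervalIntegral.integral_const_mul]
      refine intervalIntegral.integral_congr fun t _ => ?_
      have e1 : Complex.exp (2 * π * (m + 1 : ℤ) * t * Complex.I) =
          Complex.exp (2 * π * m * t * Complex.I) * Complex.exp (2 * π * t * Complex.I) := by
        rw [← Complex.exp_add]; congr 1; push_cast; ring
      have e2 : Complex.exp (2 * π * (m - 1 : ℤ) * t * Complex.I) =
          Complex.exp (2 * π * m * t * Complex.I) * Complex.exp (-(2 * π * t) * Complex.I) := by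
        rw [← Complex.exp_add]; congr 1; push_cast; ring
      have e3 : (Real.cos (2 * π * t) : ℂ) =
          (Complex.exp (2 * π * t * Complex.I) + Complex.exp (-(2 * π * t) * Complex.I)) / 2 := by
        push_cast; rfl
      simp only [e1, e2, pow_succ]
      linear_combination ((Real.cos (2 * π * t) : ℂ) ^ j *
        Complex.exp (2 * π * m * t * Complex.I) * squareWave (a * t + b)) * e3
    rw [heq, norm_mul]
    have := norm_add_le (∫ t in (0:ℝ)..T, (Real.cos (2 * π * t) : ℂ) ^ j *
          Complex.exp (2 * π * (m + 1 : ℤ) * t * Complex.I) * squareWave (a * t + b))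
        (∫ t in (0:ℝ)..T, (Real.cos (2 * π * t) : ℂ) ^ j *
          Complex.exp (2 * π * (m - 1 : ℤ) * t * Complex.I) * squareWave (a * t + b))
    norm_num at this ⊢
    have h1 := h₁ T
    have h2 := h₂ T
    norm_num at h1 h2
    linarith

lemma tendsto_average_cos_pow_mul_squareWave {a : ℝ} (ha : Irrational a) (b : ℝ) (j : ℕ) :
    Tendsto (fun T : ℝ => T⁻¹ * ∫ t in (0:ℝ)..T,
      Real.cos (2 * π * t) ^ j * squareWave (a * t + b)) atTop (nhds 0) := by
  obtain ⟨B, hB⟩ := exists_norm_integral_cos_pow_mul_exp_le ha b j 0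
  refine tendsto_inv_mul_of_abs_sub_le (B := B) fun T => ?_
  have := hB T
  simp only [Int.cast_zero, mul_zero, zero_mul, Complex.exp_zero, mul_one] at this
  rw [mul_zero, sub_zero, ← Real.norm_eq_abs, ← Complex.norm_real,
    ← intervalIntegral.integral_ofReal]
  simpa using this

lemma tendsto_average_polynomial_cos_mul_squareWave {a : ℝ} (ha : Irrational a) (b : ℝ)
    (p : Polynomial ℝ) :
    Tendsto (fun T : ℝ => T⁻¹ * ∫ t in (0:ℝ)..T,
      p.eval (Real.cos (2 * π * t)) * squareWave (a * t + b)) atTop (nhds 0) := by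
  have hs : Measurable fun t : ℝ => squareWave (a * t + b) :=
    measurable_squareWave.comp (by fun_prop)
  have hint : ∀ j T, IntervalIntegrable (fun t : ℝ => p.coeff j * (Real.cos (2 * π * t) ^ j *
      squareWave (a * t + b))) volume 0 T := fun j T => by
    refine IntervalIntegrable.const_mul (Measurable.intervalIntegrable_of_norm_le (C := 1)
      (Measurable.mul (by fun_prop) hs) (fun t => ?_) _ _) _
    rw [Pi.mul_apply, norm_mul, norm_pow]
    exact mul_le_one₀ (pow_le_one₀ (norm_nonneg _) (Real.abs_cos_le_one _)) (norm_nonneg _)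
      (abs_squareWave_le_one _)
  have h := tendsto_finsetSum (Finset.range (p.natDegree + 1)) fun j _ =>
    (tendsto_average_cos_pow_mul_squareWave ha b j).const_mul (p.coeff j)
  simp only [mul_zero, Finset.sum_const_zero] at h
  refine h.congr fun T => ?_
  simp only [Polynomial.eval_eq_sum_range, Finset.sum_mul, mul_assoc] at hint ⊢
  rw [intervalIntegral.integral_finsetSum fun j _ => hint j T, Finset.mul_sum]
  refine Finset.sum_congr rfl fun j _ => ?_
  rw [intervalIntegral.integral_const_mul]
  ring

/-- Continuous bounded approximations of `sgn`. -/
lemma tendsto_softsign (x : ℝ) :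
    Tendsto (fun k : ℕ => k * x / (1 + k * |x|)) atTop (nhds (sgn x)) := by
  have key : ∀ y : ℝ, 0 < y → Tendsto (fun k : ℕ => k * y / (1 + k * y)) atTop (nhds 1) := by
    intro y hy
    have h1 : Tendsto (fun k : ℕ => 1 + (k : ℝ) * y) atTop atTop :=
      tendsto_atTop_add_const_left _ _ (tendsto_natCast_atTop_atTop.atTop_mul_const hy)
    have h2 := h1.inv_tendsto_atTop.const_sub 1
    rw [sub_zero] at h2
    refine h2.congr fun k => ?_
    have : 1 + (k : ℝ) * y ≠ 0 := by positivity
    simp only [Pi.inv_apply]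
    field_simp
    ring
  rcases lt_trichotomy x 0 with hx | rfl | hx
  · have h := (key (-x) (neg_pos.2 hx)).neg
    simp only [sgn, hx, not_lt_of_gt, if_false, if_true, abs_of_neg hx]
    refine h.congr fun k => ?_
    ring
  · simp [sgn]
  · simpa [sgn, hx, abs_of_pos hx] using key x hx

lemma abs_softsign_le_one (k : ℕ) (x : ℝ) : |k * x / (1 + k * |x|)| ≤ 1 := by
  have : 0 < 1 + k * |x| := by positivity
  rw [abs_div, abs_of_pos this, div_le_one this, abs_mul, Nat.abs_cast]
  linarith

lemma exists_polynomial_integral_abs_squareWave_sub_lt {ε : ℝ} (hε : 0 < ε) :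
    ∃ p : Polynomial ℝ,
      ∫ t in (0:ℝ)..1, |squareWave t - p.eval (Real.cos (2 * π * t))| < ε := by
  have hlim : Tendsto (fun k : ℕ => ∫ t in (0:ℝ)..1, |squareWave t -
      k * Real.cos (2 * π * t) / (1 + k * |Real.cos (2 * π * t)|)|) atTop
      (nhds (∫ _t in (0:ℝ)..1, (0:ℝ))) := by
    refine intervalIntegral.tendsto_integral_filter_of_dominated_convergence (fun _ => 2)
      (Eventually.of_forall fun k => ?_) (Eventually.of_forall fun k => ?_)
      intervalIntegrable_const ?_
    · exact (Measurable.abs (measurable_squareWave.sub (by fun_prop))).aestronglyMeasurable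
    · refine Eventually.of_forall fun t _ => ?_
      rw [Real.norm_eq_abs, abs_abs]
      linarith [abs_sub (squareWave t)
        (k * Real.cos (2 * π * t) / (1 + k * |Real.cos (2 * π * t)|)),
        abs_squareWave_le_one t, abs_softsign_le_one k (Real.cos (2 * π * t))]
    · refine Eventually.of_forall fun t _ => ?_
      have := ((tendsto_softsign (Real.cos (2 * π * t))).const_sub (squareWave t)).abs
      simpa [squareWave] using this
  rw [intervalIntegral.integral_zero] at hlim
  obtain ⟨k, hk⟩ := (hlim.eventually (gt_mem_nhds (half_pos hε))).exists
  have hcont : Continuous fun x : ℝ => k * x / (1 + k * |x|) := by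
    refine Continuous.div (by fun_prop) (by fun_prop) fun x => ?_
    positivity
  obtain ⟨p, hp⟩ := exists_polynomial_near_of_continuousOn (-1) 1 _ hcont.continuousOn (ε / 2)
    (half_pos hε)
  refine ⟨p, ?_⟩
  have hcos : Continuous fun t : ℝ => Real.cos (2 * π * t) := by fun_prop
  have hi1 : IntervalIntegrable (fun t => |squareWave t -
      k * Real.cos (2 * π * t) / (1 + k * |Real.cos (2 * π * t)|)|) volume 0 1 :=
    ((measurable_squareWave.intervalIntegrable_of_norm_le abs_squareWave_le_one _ _).sub
      ((hcont.comp hcos).intervalIntegrable _ _)).abs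
  have hi2 : IntervalIntegrable (fun t => |squareWave t - p.eval (Real.cos (2 * π * t))|)
      volume 0 1 :=
    ((measurable_squareWave.intervalIntegrable_of_norm_le abs_squareWave_le_one _ _).sub
      ((p.continuous.comp hcos).intervalIntegrable _ _)).abs
  calc ∫ t in (0:ℝ)..1, |squareWave t - p.eval (Real.cos (2 * π * t))|
      ≤ ∫ t in (0:ℝ)..1, (|squareWave t -
          k * Real.cos (2 * π * t) / (1 + k * |Real.cos (2 * π * t)|)| + ε / 2) := by
        refine intervalIntegral.integral_mono_on zero_le_one hi2
          (hi1.add intervalIntegrable_const) fun t _ => ?_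
        have h1 := hp _ ⟨Real.neg_one_le_cos (2 * π * t), Real.cos_le_one _⟩
        rw [abs_sub_comm] at h1
        linarith [abs_sub_le (squareWave t)
          (k * Real.cos (2 * π * t) / (1 + k * |Real.cos (2 * π * t)|))
          (p.eval (Real.cos (2 * π * t)))]
    _ = (∫ t in (0:ℝ)..1, |squareWave t -
          k * Real.cos (2 * π * t) / (1 + k * |Real.cos (2 * π * t)|)|) + ε / 2 := by
        rw [intervalIntegral.integral_add hi1 intervalIntegrable_const]; simp
    _ < ε := by linarith

lemma tendsto_average_of_irrational {a : ℝ} (ha : Irrational a) (b : ℝ) :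
    Tendsto (fun T : ℝ => T⁻¹ * ∫ t in (0:ℝ)..T, Φ t (a * t + b)) atTop (nhds 0) := by
  rw [Metric.tendsto_nhds]
  intro ε hε
  obtain ⟨p, hp⟩ := exists_polynomial_integral_abs_squareWave_sub_lt (half_pos hε)
  have hpcont : Continuous fun t : ℝ => p.eval (Real.cos (2 * π * t)) :=
    p.continuous.comp (by fun_prop)
  obtain ⟨C, hC⟩ := (isCompact_Icc (a := (-1:ℝ)) (b := 1)).exists_bound_of_continuousOn
    p.continuous.continuousOn
  have hpC : ∀ t : ℝ, |p.eval (Real.cos (2 * π * t))| ≤ C := fun t =>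
    hC _ ⟨Real.neg_one_le_cos _, Real.cos_le_one _⟩
  have hs : Measurable fun t : ℝ => squareWave (a * t + b) :=
    measurable_squareWave.comp (by fun_prop)
  have hDm : Measurable fun t => |squareWave t - p.eval (Real.cos (2 * π * t))| :=
    (measurable_squareWave.sub hpcont.measurable).abs
  have hDb : ∀ t, |(|squareWave t - p.eval (Real.cos (2 * π * t))|)| ≤ 1 + C := fun t => by
    rw [abs_abs]
    linarith [abs_sub (squareWave t) (p.eval (Real.cos (2 * π * t))),
      abs_squareWave_le_one t, hpC t]
  have hDper : Function.Periodic
      (fun t => |squareWave t - p.eval (Real.cos (2 * π * t))|) 1 := fun t => by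
    have h1 := squareWave_add_int t 1
    have h2 := cos_two_pi_mul_add_int t 1
    rw [Int.cast_one] at h1 h2
    simp only [h1, h2]
  have hD := hDper.tendsto_average one_pos hDm hDb
  rw [inv_one, one_mul] at hD
  have hP := (tendsto_average_polynomial_cos_mul_squareWave ha b p).eventually
    (Metric.ball_mem_nhds 0 (half_pos hε))
  filter_upwards [hD.eventually (gt_mem_nhds hp), hP, eventually_gt_atTop 0] with T h1 h2 hT
  rw [dist_zero_right, Real.norm_eq_abs] at h2
  rw [dist_zero_right, Real.norm_eq_abs]
  have hi1 : IntervalIntegrable (fun t => (squareWave t - p.eval (Real.cos (2 * π * t))) *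
      squareWave (a * t + b)) volume 0 T := by
    refine Measurable.intervalIntegrable_of_norm_le (C := 1 + C)
      ((measurable_squareWave.sub hpcont.measurable).mul hs) (fun t => ?_) _ _
    rw [Pi.mul_apply, norm_mul]
    refine (mul_le_of_le_one_right (norm_nonneg _) (abs_squareWave_le_one _)).trans ?_
    simpa using hDb t
  have hi2 : IntervalIntegrable (fun t => p.eval (Real.cos (2 * π * t)) *
      squareWave (a * t + b)) volume 0 T := by
    refine Measurable.intervalIntegrable_of_norm_le (C := C)
      (hpcont.measurable.mul hs) (fun t => ?_) _ _
    rw [Pi.mul_apply, norm_mul]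
    exact (mul_le_of_le_one_right (norm_nonneg _) (abs_squareWave_le_one _)).trans (hpC t)
  have hsplit : (∫ t in (0:ℝ)..T, Φ t (a * t + b)) =
      (∫ t in (0:ℝ)..T, (squareWave t - p.eval (Real.cos (2 * π * t))) *
        squareWave (a * t + b)) +
      ∫ t in (0:ℝ)..T, p.eval (Real.cos (2 * π * t)) * squareWave (a * t + b) := by
    rw [← intervalIntegral.integral_add hi1 hi2]
    refine intervalIntegral.integral_congr fun t _ => ?_
    simp only [Φ_eq_mul]
    ring
  have hle : |∫ t in (0:ℝ)..T, (squareWave t - p.eval (Real.cos (2 * π * t))) *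
        squareWave (a * t + b)| ≤
      ∫ t in (0:ℝ)..T, |squareWave t - p.eval (Real.cos (2 * π * t))| := by
    rw [← Real.norm_eq_abs]
    refine intervalIntegral.norm_integral_le_of_norm_le hT.le
      (Eventually.of_forall fun t _ => ?_) (hDm.intervalIntegrable_of_norm_le hDb _ _)
    rw [norm_mul]
    exact mul_le_of_le_one_right (norm_nonneg _) (abs_squareWave_le_one _)
  rw [hsplit, mul_add]
  refine (abs_add_le _ _).trans_lt ?_
  rw [abs_mul T⁻¹, abs_of_pos (inv_pos.2 hT)]
  have := mul_le_mul_of_nonneg_left hle (inv_pos.2 hT).le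
  linarith

lemma periodic_Φ_line_of_rat (q : ℚ) (b : ℝ) :
    Function.Periodic (fun t : ℝ => Φ t (q * t + b)) q.den := by
  intro t
  have h1 := squareWave_add_int t q.den
  have h2 := squareWave_add_int (q * t + b) q.num
  have h3 : (q : ℝ) * q.den = q.num := by exact_mod_cast Rat.mul_den_eq_num q
  have h4 : (q : ℝ) * (t + q.den) + b = q * t + b + q.num := by linear_combination h3
  rw [Int.cast_natCast] at h1
  simp only [Φ_eq_mul, h4, h1, h2]

theorem time_average_exists
    (a b : ℝ) :
    ∃ L : ℝ,
      Tendsto (fun T : ℝ => (1 / T) * ∫ t in (0:ℝ)..T, Φ t (a * t + b)) atTop (nhds L) ∧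
      (Irrational a → L = 0) := by
  simp only [one_div]
  by_cases ha : Irrational a
  · exact ⟨0, tendsto_average_of_irrational ha b, fun _ => rfl⟩
  · obtain ⟨q, rfl⟩ := not_not.1 ha
    refine ⟨_, (periodic_Φ_line_of_rat q b).tendsto_average (C := 1)
      (by exact_mod_cast q.den_pos) ?_ fun t => abs_sgn_le_one _, fun h => absurd h ha⟩
    simp only [Φ_eq_mul]
    exact measurable_squareWave.mul (measurable_squareWave.comp (by fun_prop))
end

section
/- Let A, B be nonzero real numbers, α, β ∈ ℝ, and let p, q be nonzero integers with A·q = B·p. Then (1/T)·∫₀ᵀ Φ(A·t − α, B·t − β) dt → ∫₀¹ Φ(p·s − α, q·s − β) ds as T → ∞, where Φ(u,v) = sgn(cos(2πu)·cos(2πv)); that is, the long-time average of Φ along the ray t ↦ (At − α, Bt − β) equals the average of the 1-periodic function s ↦ Φ(ps − α, qs − β) over one period. -/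
open Filter Real MeasureTheory

lemma norm_sgn_le_one (t : ℝ) : ‖sgn t‖ ≤ 1 := by
  unfold sgn
  split_ifs <;> simp

lemma Φ_add_int (u v : ℝ) (m n : ℤ) : Φ (u + m) (v + n) = Φ u v := by
  have cos_add_int (w : ℝ) (k : ℤ) : Real.cos (2 * π * (w + k)) = Real.cos (2 * π * w) := by
    rw [← Real.cos_add_int_mul_two_pi (2 * π * w) k]
    ring_nf
  simp only [Φ, cos_add_int]

/-- The primitive of a bounded 1-periodic function stays within bounded distance of the linear
function whose slope is the mean over one period. -/
lemma Function.Periodic.norm_intervalIntegral_sub_mul_le {f : ℝ → ℝ} (hf : Function.Periodic f 1)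
    (h_int : ∀ a b, IntervalIntegrable f volume a b) {C : ℝ} (hC : ∀ x, ‖f x‖ ≤ C) (x : ℝ) :
    ‖(∫ t in (0:ℝ)..x, f t) - x * ∫ t in (0:ℝ)..1, f t‖ ≤ 2 * C := by
  have hC0 : 0 ≤ C := (norm_nonneg _).trans (hC 0)
  have hfloor : ∫ t in (0:ℝ)..⌊x⌋, f t = ⌊x⌋ * ∫ t in (0:ℝ)..1, f t := by
    simpa using hf.intervalIntegral_add_zsmul_eq ⌊x⌋ 0 h_int
  have hfract : 0 ≤ Int.fract x := Int.fract_nonneg x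
  have hfract_le : Int.fract x ≤ 1 := (Int.fract_lt_one x).le
  have hsplit : (∫ t in (0:ℝ)..x, f t) - x * ∫ t in (0:ℝ)..1, f t
      = (∫ t in (⌊x⌋:ℝ)..x, f t) - Int.fract x * ∫ t in (0:ℝ)..1, f t := by
    rw [← intervalIntegral.integral_add_adjacent_intervals (h_int 0 ⌊x⌋) (h_int _ x), hfloor,
      Int.fract]
    ring
  have htail : ‖∫ t in (⌊x⌋:ℝ)..x, f t‖ ≤ C := by
    have h := intervalIntegral.norm_integral_le_of_norm_le_const (a := (⌊x⌋:ℝ)) (b := x)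
      fun t _ => hC t
    rw [Int.self_sub_floor, abs_of_nonneg hfract] at h
    exact h.trans (mul_le_of_le_one_right hC0 hfract_le)
  have hmean : ‖∫ t in (0:ℝ)..1, f t‖ ≤ C := by
    simpa using intervalIntegral.norm_integral_le_of_norm_le_const (a := (0:ℝ)) (b := 1)
      fun t _ => hC t
  rw [hsplit]
  refine (norm_sub_le _ _).trans ?_
  rw [norm_mul, Real.norm_of_nonneg hfract, two_mul]
  exact add_le_add htail ((mul_le_of_le_one_left (norm_nonneg _) hfract_le).trans hmean)

/-- The long-time average of a bounded 1-periodic function, run at any nonzero speed, is its mean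
over one period. -/
lemma Function.Periodic.tendsto_average_s15 {f : ℝ → ℝ} (hf : Function.Periodic f 1)
    (h_int : ∀ a b, IntervalIntegrable f volume a b) {C : ℝ} (hC : ∀ x, ‖f x‖ ≤ C)
    {c : ℝ} (hc : c ≠ 0) :
    Tendsto (fun T : ℝ => (1 / T) * ∫ t in (0:ℝ)..T, f (c * t)) atTop
      (nhds (∫ s in (0:ℝ)..1, f s)) := by
  have hlim : Tendsto (fun T : ℝ => 2 * C / |c| / T) atTop (nhds 0) :=
    tendsto_const_nhds.div_atTop tendsto_id
  refine tendsto_iff_norm_sub_tendsto_zero.2 (squeeze_zero' (.of_forall fun _ => norm_nonneg _)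
    ?_ hlim)
  filter_upwards [eventually_gt_atTop 0] with T hT
  have hscale : (1 / T) * (∫ t in (0:ℝ)..T, f (c * t)) - ∫ s in (0:ℝ)..1, f s
      = ((∫ t in (0:ℝ)..c * T, f t) - c * T * ∫ s in (0:ℝ)..1, f s) / (c * T) := by
    rw [intervalIntegral.integral_comp_mul_left f hc, mul_zero, smul_eq_mul]
    field_simp
  rw [hscale, norm_div, norm_mul, Real.norm_of_nonneg hT.le, Real.norm_eq_abs c, div_div]
  gcongr
  exact hf.norm_intervalIntegral_sub_mul_le h_int hC _

theorem time_average_eq_period_average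
    (A B : ℝ) (hA : A ≠ 0) (hB : B ≠ 0) (α β : ℝ)
    (p q : ℤ) (hp : p ≠ 0) (hq : q ≠ 0) (hpq : A * (q : ℝ) = B * (p : ℝ)) :
    Tendsto (fun T : ℝ => (1 / T) * ∫ t in (0:ℝ)..T, Φ (A * t - α) (B * t - β))
      atTop (nhds (∫ s in (0:ℝ)..1, Φ ((p : ℝ) * s - α) ((q : ℝ) * s - β))) := by
  have hp' : (p : ℝ) ≠ 0 := Int.cast_ne_zero.2 hp
  set f : ℝ → ℝ := fun s => Φ (p * s - α) (q * s - β) with hf_def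
  have hper : Function.Periodic f 1 := fun s => by
    rw [hf_def]
    beta_reduce
    rw [← Φ_add_int (p * s - α) (q * s - β) p q]
    ring_nf
  have hbound : ∀ s, ‖f s‖ ≤ 1 := fun s => norm_sgn_le_one _
  have hmeas : Measurable f := measurable_sgn.comp (by fun_prop)
  have h_int : ∀ a b, IntervalIntegrable f volume a b := fun a b =>
    (intervalIntegrable_const (c := (1:ℝ))).mono_fun hmeas.aestronglyMeasurable
      (.of_forall fun s => by simpa using hbound s)
  have hray : ∀ t, Φ (A * t - α) (B * t - β) = f (A / p * t) := fun t => by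
    have hA' : p * (A / p * t) = A * t := by field_simp
    have hB' : q * (A / p * t) = B * t := by
      field_simp
      linear_combination t * hpq
    simp only [hf_def, hA', hB']
  simp only [hray]
  exact hper.tendsto_average_s15 h_int hbound (div_ne_zero hA hp')
end
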